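/- arXiv:2009.04997 — 2 statements merged into one kernel-verified Lean document; each statement's English description precedes it below -/
import Mathlib

section
/- Let φ = (1 + √5)/2 be the golden ratio and let q = (i + φ⁻¹·j + φ·k)/2, a unit quaternion. Let I*₁₂₀ be the subgroup of the unit quaternions generated by T*₂₄ ∪ {q} (the binary icosahedral group). Then I*₁₂₀ has exactly 120 elements, T*₂₄ is a subgroup of I*₁₂₀ of index 5, and T*₂₄ is not a normal subgroup of I*₁₂₀. -/
/-- The imaginary unit `i` of the real quaternions. -/
noncomputable def qi : Quaternion ℝ := ⟨0, 1, 0, 0⟩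
/-- The imaginary unit `j` of the real quaternions. -/
noncomputable def qj : Quaternion ℝ := ⟨0, 0, 1, 0⟩
/-- The imaginary unit `k` of the real quaternions. -/
noncomputable def qk : Quaternion ℝ := ⟨0, 0, 0, 1⟩

/-- The quaternion group `Q₈ = {±1, ±i, ±j, ±k}`. -/
noncomputable def Q8 : Set (Quaternion ℝ) := {1, -1, qi, -qi, qj, -qj, qk, -qk}

/-- The binary tetrahedral group `T*₂₄` as a set of real quaternions. -/
noncomputable def T24 : Set (Quaternion ℝ) :=
  Q8 ∪
    {x | ∃ e₀ e₁ e₂ e₃ : ℝ, (e₀ = 1 ∨ e₀ = -1) ∧ (e₁ = 1 ∨ e₁ = -1) ∧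
      (e₂ = 1 ∨ e₂ = -1) ∧ (e₃ = 1 ∨ e₃ = -1) ∧
      x = ((e₀ : Quaternion ℝ) + (e₁ : Quaternion ℝ) * qi + (e₂ : Quaternion ℝ) * qj +
        (e₃ : Quaternion ℝ) * qk) / 2}

/-- The golden ratio `φ = (1 + √5)/2`. -/
noncomputable def goldφ : ℝ := (1 + Real.sqrt 5) / 2

/-- The unit quaternion `q = (i + φ⁻¹·j + φ·k)/2`. -/
noncomputable def icoq : Quaternion ℝ :=
  (qi + (goldφ⁻¹ : ℝ) * qj + (goldφ : ℝ) * qk) / 2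

/-- The subgroup of the quaternions generated (under multiplication and inversion) by a
set `S`: the smallest set containing `S`, containing `1`, and closed under multiplication
and inversion. -/
noncomputable def genSubgroup (S : Set (Quaternion ℝ)) : Set (Quaternion ℝ) :=
  ⋂₀ {G | S ⊆ G ∧ (1 : Quaternion ℝ) ∈ G ∧
    (∀ x ∈ G, ∀ y ∈ G, x * y ∈ G) ∧ (∀ x ∈ G, x⁻¹ ∈ G)}

/-- The binary icosahedral group `I*₁₂₀`: the subgroup of the unit quaternions generated by
`T*₂₄ ∪ {(i + φ⁻¹·j + φ·k)/2}`. -/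
noncomputable def I120 : Set (Quaternion ℝ) := genSubgroup (T24 ∪ {icoq})

open Quaternion

/-- The field `ℚ(φ)` in the basis `1, φ`, where arithmetic is computable. -/
abbrev GoldenField := QuadraticAlgebra ℚ 1 1

namespace GoldenField

/-- The embedding of `ℚ(φ)` into the reals. -/
noncomputable def toReal : GoldenField →ₐ[ℚ] ℝ :=
  QuadraticAlgebra.lift ⟨Real.goldenRatio, by
    simp [← sq, Real.goldenRatio_sq, add_comm]⟩

theorem toReal_apply (x : GoldenField) : toReal x = x.re + x.im * Real.goldenRatio := by
  simp [toReal, QuadraticAlgebra.lift, Algebra.smul_def]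

theorem toReal_injective : Function.Injective toReal := by
  rw [injective_iff_map_eq_zero]
  intro x hx
  rw [toReal_apply] at hx
  have him : x.im = 0 := by
    by_contra h
    refine Real.goldenRatio_irrational ⟨-x.re / x.im, ?_⟩
    have h' : (x.im : ℝ) ≠ 0 := by exact_mod_cast h
    push_cast
    rw [div_eq_iff h']
    linarith
  have hre : x.re = 0 := by simpa [him] using hx
  ext <;> simp [him, hre]

end GoldenField

instance GoldenField.decidableEqQuaternion : DecidableEq ℍ[GoldenField] := fun x y =>
  decidable_of_iff (x.re = y.re ∧ x.imI = y.imI ∧ x.imJ = y.imJ ∧ x.imK = y.imK)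
    Quaternion.ext_iff.symm

/-- The ring homomorphism between quaternion rings induced by a homomorphism of coefficients. -/
def quaternionMap {R S : Type*} [CommRing R] [CommRing S] (g : R →+* S) : ℍ[R] →+* ℍ[S] where
  toFun x := ⟨g x.re, g x.imI, g x.imJ, g x.imK⟩
  map_one' := by ext <;> simp
  map_zero' := by ext <;> simp
  map_mul' x y := by
    ext
    · refine Eq.trans ?_ (Quaternion.re_mul _ _).symm; simp
    · refine Eq.trans ?_ (Quaternion.imI_mul _ _).symm; simp
    · refine Eq.trans ?_ (Quaternion.imJ_mul _ _).symm; simp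
    · refine Eq.trans ?_ (Quaternion.imK_mul _ _).symm; simp
  map_add' x y := by
    ext
    · refine Eq.trans ?_ (Quaternion.re_add _ _).symm; simp
    · refine Eq.trans ?_ (Quaternion.imI_add _ _).symm; simp
    · refine Eq.trans ?_ (Quaternion.imJ_add _ _).symm; simp
    · refine Eq.trans ?_ (Quaternion.imK_add _ _).symm; simp

theorem quaternionMap_injective {R S : Type*} [CommRing R] [CommRing S] {g : R →+* S}
    (hg : Function.Injective g) : Function.Injective (quaternionMap g) := by
  intro x y h
  have h' := Quaternion.ext_iff.mp h
  exact Quaternion.ext_iff.mpr ⟨hg h'.1, hg h'.2.1, hg h'.2.2.1, hg h'.2.2.2⟩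

namespace Icosian

/-- The embedding of the quaternions over `ℚ(φ)` into the real quaternions. -/
noncomputable def toQuaternion : ℍ[GoldenField] →+* ℍ[ℝ] :=
  quaternionMap GoldenField.toReal.toRingHom

theorem toQuaternion_injective : Function.Injective toQuaternion :=
  quaternionMap_injective GoldenField.toReal_injective

/-- The element `1/2` of `ℚ(φ)`. -/
def half : GoldenField := ⟨1 / 2, 0⟩

/-- The two elements `1/2` and `-1/2` of `ℚ(φ)`. -/
def signedHalves : Finset GoldenField := {half, -half}

/-- The unit `i`. -/
def unitI : ℍ[GoldenField] := ⟨0, 1, 0, 0⟩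

/-- The unit `j`. -/
def unitJ : ℍ[GoldenField] := ⟨0, 0, 1, 0⟩

/-- The unit `k`. -/
def unitK : ℍ[GoldenField] := ⟨0, 0, 0, 1⟩

/-- The element `(1 + i + j + k)/2` of order six. -/
def hurwitzUnit : ℍ[GoldenField] := ⟨half, half, half, half⟩

/-- The element `(i + φ⁻¹ j + φ k)/2`. -/
def icosianGenerator : ℍ[GoldenField] := ⟨0, half, ⟨-1 / 2, 1 / 2⟩, ⟨0, 1 / 2⟩⟩

/-- An icosian of order ten whose powers represent the cosets of the tetrahedral group. -/
def rotor : ℍ[GoldenField] := icosianGenerator * star hurwitzUnit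

/-- The elements of the binary tetrahedral group over `ℚ(φ)`. -/
def tetrahedral : Finset ℍ[GoldenField] :=
  {1, -1, unitI, -unitI, unitJ, -unitJ, unitK, -unitK} ∪
    (signedHalves ×ˢ signedHalves ×ˢ signedHalves ×ˢ signedHalves).image
      fun e => ⟨e.1, e.2.1, e.2.2.1, e.2.2.2⟩

theorem card_tetrahedral : tetrahedral.card = 24 := by decide +kernel

theorem generators_mul_mem_tetrahedral :
    ∀ t ∈ tetrahedral, unitI * t ∈ tetrahedral ∧ unitJ * t ∈ tetrahedral ∧
      hurwitzUnit * t ∈ tetrahedral := by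
  decide +kernel

theorem exists_word_of_mem_tetrahedral :
    ∀ t ∈ tetrahedral, ∃ a < 4, ∃ b < 2, ∃ c < 3, t = unitI ^ a * unitJ ^ b * hurwitzUnit ^ c := by
  decide +kernel

theorem star_mem_tetrahedral : ∀ t ∈ tetrahedral, star t ∈ tetrahedral ∧ t * star t = 1 := by
  decide +kernel

theorem rotor_pow_five : rotor ^ 5 = -1 := by decide +kernel

theorem rotor_mul_star : rotor * star rotor = 1 := by decide +kernel

theorem star_mul_rotor : star rotor * rotor = 1 := by decide +kernel

theorem star_rotor_eq : star rotor = rotor ^ 4 * -1 := by decide +kernel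

theorem rotor_pow_notMem : ∀ a < 5, a ≠ 0 → rotor ^ a ∉ tetrahedral := by decide +kernel

theorem rotor_conj_unitI_notMem : rotor * unitI * star rotor ∉ tetrahedral := by decide +kernel

theorem generators_mul_rotor_pow :
    ∀ x ∈ [unitI, unitJ, hurwitzUnit], ∀ a < 5, ∃ b < 5,
      star (rotor ^ b) * (x * rotor ^ a) ∈ tetrahedral := by
  decide +kernel

theorem add_mul_div_two_eq {a b c d : ℝ} {y : ℍ[ℝ]} (hre : y.re = a / 2) (hI : y.imI = b / 2)
    (hJ : y.imJ = c / 2) (hK : y.imK = d / 2) :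
    ((a : ℍ[ℝ]) + (b : ℍ[ℝ]) * qi + (c : ℍ[ℝ]) * qj + (d : ℍ[ℝ]) * qk) / 2 = y := by
  have two_ne : (2 : ℍ[ℝ]) ≠ 0 := fun h => two_ne_zero (α := ℝ) (congrArg QuaternionAlgebra.re h)
  rw [div_eq_iff two_ne, mul_two]
  have i_coords : qi.re = 0 ∧ qi.imI = 1 ∧ qi.imJ = 0 ∧ qi.imK = 0 := ⟨rfl, rfl, rfl, rfl⟩
  have j_coords : qj.re = 0 ∧ qj.imI = 0 ∧ qj.imJ = 1 ∧ qj.imK = 0 := ⟨rfl, rfl, rfl, rfl⟩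
  have k_coords : qk.re = 0 ∧ qk.imI = 0 ∧ qk.imJ = 0 ∧ qk.imK = 1 := ⟨rfl, rfl, rfl, rfl⟩
  ext <;> simp [i_coords, j_coords, k_coords, hre, hI, hJ, hK]

theorem toQuaternion_unitI : toQuaternion unitI = qi :=
  QuaternionAlgebra.ext (map_zero _) (map_one _) (map_zero _) (map_zero _)

theorem toQuaternion_unitJ : toQuaternion unitJ = qj :=
  QuaternionAlgebra.ext (map_zero _) (map_zero _) (map_one _) (map_zero _)

theorem toQuaternion_unitK : toQuaternion unitK = qk :=
  QuaternionAlgebra.ext (map_zero _) (map_zero _) (map_zero _) (map_one _)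

theorem toReal_half : GoldenField.toReal half = 1 / 2 := by
  simp [GoldenField.toReal_apply, half]

theorem toQuaternion_icosianGenerator : toQuaternion icosianGenerator = icoq := by
  have hφ : goldφ = Real.goldenRatio := rfl
  have h := add_mul_div_two_eq (a := 0) (b := 1) (c := goldφ⁻¹) (d := goldφ)
    (y := toQuaternion icosianGenerator)
    ((map_zero _).trans (by simp)) toReal_half
    ((GoldenField.toReal_apply _).trans (by
      rw [hφ, Real.inv_goldenRatio, ← Real.one_sub_goldenRatio]
      simp only [icosianGenerator]
      push_cast
      ring))
    ((GoldenField.toReal_apply _).trans (by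
      rw [hφ]
      simp only [icosianGenerator]
      push_cast
      ring))
  rw [← h, icoq]
  simp

theorem exists_mem_signedHalves_iff {e : ℝ} :
    (∃ s ∈ signedHalves, GoldenField.toReal s = e / 2) ↔ e = 1 ∨ e = -1 := by
  simp only [signedHalves, Finset.mem_insert, Finset.mem_singleton, exists_eq_or_imp,
    exists_eq_left, map_neg, toReal_half]
  constructor
  · rintro (h | h)
    · left; linarith
    · right; linarith
  · rintro (rfl | rfl) <;> norm_num

theorem image_tetrahedral : toQuaternion '' tetrahedral = T24 := by
  rw [tetrahedral, Finset.coe_union, Set.image_union, T24]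
  congr 1
  · simp [Set.image_insert_eq, Q8, toQuaternion_unitI, toQuaternion_unitJ, toQuaternion_unitK]
  · ext x
    constructor
    · rintro ⟨y, hy, rfl⟩
      obtain ⟨⟨a, b, c, d⟩, habcd, rfl⟩ := Finset.mem_image.mp (Finset.mem_coe.mp hy)
      simp only [Finset.mem_product] at habcd
      obtain ⟨ha, hb, hc, hd⟩ := habcd
      have key : ∀ s : GoldenField, GoldenField.toReal s = (2 * GoldenField.toReal s) / 2 :=
        fun s => by ring
      exact ⟨_, _, _, _, exists_mem_signedHalves_iff.mp ⟨a, ha, key a⟩,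
        exists_mem_signedHalves_iff.mp ⟨b, hb, key b⟩, exists_mem_signedHalves_iff.mp ⟨c, hc, key c⟩,
        exists_mem_signedHalves_iff.mp ⟨d, hd, key d⟩,
        (add_mul_div_two_eq (key a) (key b) (key c) (key d)).symm⟩
    · rintro ⟨e₀, e₁, e₂, e₃, h₀, h₁, h₂, h₃, rfl⟩
      obtain ⟨a, ha, ha'⟩ := exists_mem_signedHalves_iff.mpr h₀
      obtain ⟨b, hb, hb'⟩ := exists_mem_signedHalves_iff.mpr h₁
      obtain ⟨c, hc, hc'⟩ := exists_mem_signedHalves_iff.mpr h₂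
      obtain ⟨d, hd, hd'⟩ := exists_mem_signedHalves_iff.mpr h₃
      refine ⟨⟨a, b, c, d⟩, ?_, (add_mul_div_two_eq ha' hb' hc' hd').symm⟩
      exact Finset.mem_coe.mpr (Finset.mem_image.mpr ⟨(a, b, c, d), by simp [ha, hb, hc, hd], rfl⟩)

/-- The binary tetrahedral group over `ℚ(φ)` as a submonoid. -/
def tetrahedralSubmonoid : Submonoid ℍ[GoldenField] where
  carrier := tetrahedral
  one_mem' := Finset.mem_coe.mpr (by simp [tetrahedral])
  mul_mem' {x y} hx hy := by
    let stabilizer : Submonoid ℍ[GoldenField] :=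
      { carrier := {x | ∀ t ∈ tetrahedral, x * t ∈ tetrahedral}
        one_mem' := fun t ht => by rwa [one_mul]
        mul_mem' := fun ha hb t ht => by rw [mul_assoc]; exact ha _ (hb t ht) }
    have hI : unitI ∈ stabilizer := fun t ht => (generators_mul_mem_tetrahedral t ht).1
    have hJ : unitJ ∈ stabilizer := fun t ht => (generators_mul_mem_tetrahedral t ht).2.1
    have hω : hurwitzUnit ∈ stabilizer := fun t ht => (generators_mul_mem_tetrahedral t ht).2.2
    obtain ⟨a, -, b, -, c, -, rfl⟩ := exists_word_of_mem_tetrahedral x hx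
    exact mul_mem (mul_mem (pow_mem hI a) (pow_mem hJ b)) (pow_mem hω c) y hy

theorem mul_mem_tetrahedral {x y : ℍ[GoldenField]} (hx : x ∈ tetrahedral)
    (hy : y ∈ tetrahedral) : x * y ∈ tetrahedral :=
  tetrahedralSubmonoid.mul_mem hx hy

theorem one_mem_tetrahedral : (1 : ℍ[GoldenField]) ∈ tetrahedral :=
  tetrahedralSubmonoid.one_mem

theorem neg_one_mem_tetrahedral : (-1 : ℍ[GoldenField]) ∈ tetrahedral := by simp [tetrahedral]

theorem rotor_pow_mul_star (n : ℕ) : rotor ^ n * star (rotor ^ n) = 1 := by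
  have h : star (rotor ^ n) = star rotor ^ n := star_pow rotor n
  rw [h]
  exact pow_mul_pow_eq_one n rotor_mul_star

/-- The submonoid permuting the left cosets `rotor ^ a * tetrahedral`, `a < 5`. -/
def cosetStabilizer : Submonoid ℍ[GoldenField] where
  carrier := {x | ∀ a < 5, ∃ b < 5, ∃ t ∈ tetrahedral, x * rotor ^ a = rotor ^ b * t}
  one_mem' := fun a ha => ⟨a, ha, 1, one_mem_tetrahedral, by simp⟩
  mul_mem' := by
    intro x y hx hy a ha
    obtain ⟨b, hb, t, ht, hyt⟩ := hy a ha
    obtain ⟨c, hc, s, hs, hxs⟩ := hx b hb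
    exact ⟨c, hc, s * t, mul_mem_tetrahedral hs ht, by
      rw [mul_assoc, hyt, ← mul_assoc, hxs, mul_assoc]⟩

theorem generator_mem_cosetStabilizer {x : ℍ[GoldenField]}
    (hx : x ∈ [unitI, unitJ, hurwitzUnit]) : x ∈ cosetStabilizer := fun a ha => by
  obtain ⟨b, hb, h⟩ := generators_mul_rotor_pow x hx a ha
  exact ⟨b, hb, _, h, by rw [← mul_assoc, rotor_pow_mul_star, one_mul]⟩

theorem mem_cosetStabilizer_of_mem_tetrahedral {t : ℍ[GoldenField]} (ht : t ∈ tetrahedral) :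
    t ∈ cosetStabilizer := by
  obtain ⟨a, -, b, -, c, -, rfl⟩ := exists_word_of_mem_tetrahedral t ht
  exact mul_mem (mul_mem (pow_mem (generator_mem_cosetStabilizer (by simp)) a)
    (pow_mem (generator_mem_cosetStabilizer (by simp)) b))
    (pow_mem (generator_mem_cosetStabilizer (by simp)) c)

theorem rotor_mem_cosetStabilizer : rotor ∈ cosetStabilizer := fun a ha => by
  rcases Nat.lt_succ_iff_lt_or_eq.mp ha with h | rfl
  · exact ⟨a + 1, by lia, 1, one_mem_tetrahedral, by rw [← pow_succ', mul_one]⟩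
  · exact ⟨0, by lia, -1, neg_one_mem_tetrahedral, by
      rw [← pow_succ', rotor_pow_five, pow_zero, one_mul]⟩

theorem mem_cosetStabilizer_iff {x : ℍ[GoldenField]} :
    x ∈ cosetStabilizer ↔ ∃ a < 5, ∃ t ∈ tetrahedral, x = rotor ^ a * t := by
  constructor
  · intro h
    simpa using h 0 (by norm_num)
  · rintro ⟨a, -, t, ht, rfl⟩
    exact mul_mem (pow_mem rotor_mem_cosetStabilizer a) (mem_cosetStabilizer_of_mem_tetrahedral ht)

theorem star_mem_cosetStabilizer {x : ℍ[GoldenField]} (hx : x ∈ cosetStabilizer) :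
    star x ∈ cosetStabilizer ∧ x * star x = 1 := by
  obtain ⟨a, -, t, ht, rfl⟩ := mem_cosetStabilizer_iff.mp hx
  obtain ⟨hst, htt⟩ := star_mem_tetrahedral t ht
  have hr : star rotor ∈ cosetStabilizer := star_rotor_eq ▸
    mul_mem (pow_mem rotor_mem_cosetStabilizer 4)
      (mem_cosetStabilizer_of_mem_tetrahedral neg_one_mem_tetrahedral)
  rw [star_mul, mul_assoc, ← mul_assoc t, htt, one_mul, rotor_pow_mul_star, star_pow]
  exact ⟨mul_mem (mem_cosetStabilizer_of_mem_tetrahedral hst) (pow_mem hr a), rfl⟩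

theorem toQuaternion_inv {x : ℍ[GoldenField]} (hx : x * star x = 1) :
    (toQuaternion x)⁻¹ = toQuaternion (star x) :=
  inv_eq_of_mul_eq_one_right (by rw [← map_mul, hx, map_one])

theorem rotor_pow_mul_inj {a b : ℕ} (ha : a < 5) (hb : b < 5) {s t : ℍ[GoldenField]}
    (hs : s ∈ tetrahedral) (ht : t ∈ tetrahedral) (h : rotor ^ a * s = rotor ^ b * t) :
    a = b ∧ s = t := by
  have hrotor : IsLeftRegular rotor := isLeftRegular_of_mul_eq_one star_mul_rotor
  wlog hab : a ≤ b generalizing a b s t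
  · obtain ⟨h₁, h₂⟩ := this hb ha ht hs h.symm (by lia)
    exact ⟨h₁.symm, h₂.symm⟩
  obtain ⟨c, rfl⟩ := Nat.exists_eq_add_of_le hab
  rw [pow_add, mul_assoc] at h
  have hst : s = rotor ^ c * t := hrotor.pow a h
  obtain ⟨htstar, htt⟩ := star_mem_tetrahedral t ht
  have hc : rotor ^ c ∈ tetrahedral := by
    have := mul_mem_tetrahedral hs htstar
    rwa [hst, mul_assoc, htt, mul_one] at this
  have hc₀ : c = 0 := by
    by_contra hne
    exact rotor_pow_notMem c (by lia) hne hc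
  subst hc₀
  exact ⟨rfl, by simpa using hst⟩

theorem ncard_cosetStabilizer : (cosetStabilizer : Set ℍ[GoldenField]).ncard = 120 := by
  have h : (cosetStabilizer : Set ℍ[GoldenField]) =
      ((Finset.range 5 ×ˢ tetrahedral).image fun e => rotor ^ e.1 * e.2 :) := by
    ext x
    simp only [SetLike.mem_coe, mem_cosetStabilizer_iff, Finset.coe_image, Set.mem_image,
      Finset.mem_product, Finset.mem_range, Prod.exists]
    grind
  rw [h, Set.ncard_coe_finset, Finset.card_image_of_injOn, Finset.card_product,
    Finset.card_range, card_tetrahedral]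
  rintro ⟨a, s⟩ has ⟨b, t⟩ hbt hst
  simp only [Finset.mem_coe, Finset.mem_product, Finset.mem_range] at has hbt
  obtain ⟨rfl, rfl⟩ := rotor_pow_mul_inj has.1 hbt.1 has.2 hbt.2 hst
  rfl

theorem image_cosetStabilizer : toQuaternion '' cosetStabilizer = I120 := by
  have hω : star hurwitzUnit ∈ tetrahedral := by decide +kernel
  have hgen : icosianGenerator = rotor * hurwitzUnit := by decide +kernel
  have hω' : hurwitzUnit ∈ tetrahedral := by decide +kernel
  apply Set.Subset.antisymm
  · rintro _ ⟨x, hx, rfl⟩ G ⟨hsub, hone, hmul, -⟩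
    let G' : Submonoid ℍ[ℝ] := ⟨⟨G, fun ha hb => hmul _ ha _ hb⟩, hone⟩
    have htet : ∀ t ∈ tetrahedral, toQuaternion t ∈ G' := fun t ht =>
      hsub (Or.inl (image_tetrahedral ▸ Set.mem_image_of_mem _ ht))
    have hrotor : toQuaternion rotor ∈ G' := by
      rw [rotor, map_mul, toQuaternion_icosianGenerator]
      exact mul_mem (S := Submonoid ℍ[ℝ]) (hsub (Or.inr rfl)) (htet _ hω)
    obtain ⟨a, -, t, ht, rfl⟩ := mem_cosetStabilizer_iff.mp hx
    rw [map_mul, map_pow]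
    exact mul_mem (S := Submonoid ℍ[ℝ]) (pow_mem hrotor a) (htet t ht)
  · apply Set.sInter_subset_of_mem
    refine ⟨Set.union_subset ?_ ?_, ⟨1, one_mem _, map_one _⟩, ?_, ?_⟩
    · rw [← image_tetrahedral]
      exact Set.image_mono fun t => mem_cosetStabilizer_of_mem_tetrahedral
    · rw [Set.singleton_subset_iff, ← toQuaternion_icosianGenerator, hgen]
      exact Set.mem_image_of_mem _
        (mul_mem rotor_mem_cosetStabilizer (mem_cosetStabilizer_of_mem_tetrahedral hω'))
    · rintro _ ⟨x, hx, rfl⟩ _ ⟨y, hy, rfl⟩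
      exact ⟨x * y, mul_mem hx hy, map_mul _ _ _⟩
    · rintro _ ⟨x, hx, rfl⟩
      obtain ⟨hstar, hunit⟩ := star_mem_cosetStabilizer hx
      exact ⟨star x, hstar, (toQuaternion_inv hunit).symm⟩

theorem leftCoset_eq_image (x : ℍ[GoldenField]) :
    (fun y => toQuaternion x * y) '' T24 = toQuaternion '' ((fun t => x * t) '' tetrahedral) := by
  rw [← image_tetrahedral, Set.image_image, Set.image_image]
  simp only [map_mul]

theorem image_mul_left_tetrahedral {t : ℍ[GoldenField]} (ht : t ∈ tetrahedral) :
    (fun s => t * s) '' (tetrahedral : Set ℍ[GoldenField]) = tetrahedral := by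
  obtain ⟨hstar, hunit⟩ := star_mem_tetrahedral t ht
  apply Set.Subset.antisymm
  · rintro _ ⟨s, hs, rfl⟩
    exact mul_mem_tetrahedral ht hs
  · intro s hs
    exact ⟨star t * s, mul_mem_tetrahedral hstar hs, by
      simp only [← mul_assoc, hunit, one_mul]⟩

theorem ncard_leftCosets :
    Set.ncard {C : Set ℍ[ℝ] | ∃ x ∈ I120, C = (fun y => x * y) '' T24} = 5 := by
  have h : {C : Set ℍ[ℝ] | ∃ x ∈ I120, C = (fun y => x * y) '' T24} =
      (fun a => toQuaternion '' ((fun t => rotor ^ a * t) '' tetrahedral)) ''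
        (Finset.range 5 : Set ℕ) := by
    rw [← image_cosetStabilizer]
    ext C
    constructor
    · rintro ⟨_, ⟨x, hx, rfl⟩, rfl⟩
      obtain ⟨a, ha, t, ht, rfl⟩ := mem_cosetStabilizer_iff.mp hx
      refine ⟨a, by simpa using ha, ?_⟩
      rw [leftCoset_eq_image]
      nth_rewrite 1 [← image_mul_left_tetrahedral ht]
      simp only [Set.image_image, mul_assoc]
    · rintro ⟨a, -, rfl⟩
      exact ⟨_, Set.mem_image_of_mem _ (pow_mem rotor_mem_cosetStabilizer a),
        (leftCoset_eq_image _).symm⟩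
  rw [h, Set.InjOn.ncard_image, Set.ncard_coe_finset, Finset.card_range]
  intro a ha b hb hab
  have hmem : rotor ^ a * 1 ∈ (fun t => rotor ^ b * t) '' (tetrahedral : Set ℍ[GoldenField]) := by
    rw [← toQuaternion_injective.image_injective hab]
    exact Set.mem_image_of_mem _ one_mem_tetrahedral
  obtain ⟨t, ht, h⟩ := hmem
  exact (rotor_pow_mul_inj (by simpa using hb) (by simpa using ha) ht one_mem_tetrahedral h).1.symm

end Icosian

open Icosian in
/-- `I*₁₂₀` has exactly 120 elements; `T*₂₄` is a subgroup of `I*₁₂₀` of index 5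
(there are exactly 5 left cosets of `T*₂₄` in `I*₁₂₀`), and `T*₂₄` is not normal
in `I*₁₂₀`. -/
theorem I120_card_and_T24_index_five_not_normal :
    I120.ncard = 120 ∧
    T24 ⊆ I120 ∧
    Set.ncard {C : Set (Quaternion ℝ) | ∃ x ∈ I120, C = (fun y => x * y) '' T24} = 5 ∧
    ¬ (∀ x ∈ I120, ∀ t ∈ T24, x * t * x⁻¹ ∈ T24) := by
  refine ⟨?_, ?_, ncard_leftCosets, fun hnormal => rotor_conj_unitI_notMem ?_⟩
  · rw [← image_cosetStabilizer, Set.ncard_image_of_injective _ toQuaternion_injective,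
      ncard_cosetStabilizer]
  · exact fun t ht => Set.mem_sInter.mpr fun G hG => hG.1 (Or.inl ht)
  · rw [← image_cosetStabilizer, ← image_tetrahedral] at hnormal
    have h := hnormal _ (Set.mem_image_of_mem _ rotor_mem_cosetStabilizer) (toQuaternion unitI)
      (Set.mem_image_of_mem _ (by simp [tetrahedral]))
    rwa [toQuaternion_inv rotor_mul_star, ← map_mul, ← map_mul,
      toQuaternion_injective.mem_set_image] at h
end

section
/- Let φ = (1 + √5)/2 and let I*₁₂₀ be the binary icosahedral group, the subgroup of the unit quaternions generated by T*₂₄ ∪ {(i + φ⁻¹·j + φ·k)/2}. If x and y are two distinct elements of I*₁₂₀ with ‖x − y‖ = φ⁻¹ (that is, x and y are endpoints of an edge of the regular 600-cell whose vertex set is I*₁₂₀), then x and y lie in different left cosets of T*₂₄ in I*₁₂₀, i.e. x⁻¹·y ∉ T*₂₄. Hence the five left cosets of T*₂₄ in I*₁₂₀ furnish a proper 5-colouring of the facet adjacency graph of the 120-cell. -/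
open scoped Quaternion

@[simp] lemma qi_re : qi.re = 0 := rfl
@[simp] lemma qi_imI : qi.imI = 1 := rfl
@[simp] lemma qi_imJ : qi.imJ = 0 := rfl
@[simp] lemma qi_imK : qi.imK = 0 := rfl

@[simp] lemma qj_re : qj.re = 0 := rfl
@[simp] lemma qj_imI : qj.imI = 0 := rfl
@[simp] lemma qj_imJ : qj.imJ = 1 := rfl
@[simp] lemma qj_imK : qj.imK = 0 := rfl

@[simp] lemma qk_re : qk.re = 0 := rfl
@[simp] lemma qk_imI : qk.imI = 0 := rfl
@[simp] lemma qk_imJ : qk.imJ = 0 := rfl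
@[simp] lemma qk_imK : qk.imK = 1 := rfl

lemma norm_eq_one_of_mem_genSubgroup {S : Set (Quaternion ℝ)} (hS : ∀ x ∈ S, ‖x‖ = 1)
    {x : Quaternion ℝ} (hx : x ∈ genSubgroup S) : ‖x‖ = 1 := by
  refine hx {y | ‖y‖ = 1} ⟨hS, norm_one, fun a ha b hb => ?_, fun a ha => ?_⟩
  · simp_all
  · simp_all

lemma quaternion_norm_eq_one_iff (x : Quaternion ℝ) :
    ‖x‖ = 1 ↔ x.re ^ 2 + x.imI ^ 2 + x.imJ ^ 2 + x.imK ^ 2 = 1 := by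
  rw [← Quaternion.normSq_def', Quaternion.normSq_eq_norm_mul_self, ← sq,
    pow_eq_one_iff_of_nonneg (norm_nonneg x) two_ne_zero]

lemma quaternion_div_two (x : Quaternion ℝ) : x / 2 = (2⁻¹ : ℝ) • x := by
  rw [← Quaternion.mul_coe_eq_smul, div_eq_mul_inv, Quaternion.coe_inv]
  rfl

lemma norm_eq_one_of_mem_T24 {t : Quaternion ℝ} (ht : t ∈ T24) : ‖t‖ = 1 := by
  rw [quaternion_norm_eq_one_iff]
  rcases ht with ht | ⟨a, b, c, d, ha, hb, hc, hd, rfl⟩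
  · simp only [Q8, Set.mem_insert_iff, Set.mem_singleton_iff] at ht
    rcases ht with rfl | rfl | rfl | rfl | rfl | rfl | rfl | rfl <;> simp
  · have sq_one {e : ℝ} (he : e = 1 ∨ e = -1) : e ^ 2 = 1 := sq_eq_one_iff.mpr he
    simp only [quaternion_div_two]
    simp [mul_pow, sq_one ha, sq_one hb, sq_one hc, sq_one hd]
    norm_num

lemma re_le_half_of_mem_T24 {t : Quaternion ℝ} (ht : t ∈ T24) (h1 : t ≠ 1) :
    t.re ≤ 1 / 2 := by
  rcases ht with ht | ⟨a, b, c, d, ha, hb, hc, hd, rfl⟩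
  · simp only [Q8, Set.mem_insert_iff, Set.mem_singleton_iff] at ht
    rcases ht with rfl | rfl | rfl | rfl | rfl | rfl | rfl | rfl
    · exact absurd rfl h1
    all_goals norm_num
  · rw [quaternion_div_two]
    rcases ha with rfl | rfl <;> norm_num

lemma goldφ_eq_goldenRatio : goldφ = Real.goldenRatio := rfl

lemma norm_icoq : ‖icoq‖ = 1 := by
  have hinv : goldφ⁻¹ = goldφ - 1 := by
    rw [goldφ_eq_goldenRatio, Real.inv_goldenRatio]
    linarith [Real.goldenRatio_add_goldenConj]
  have hsq : goldφ ^ 2 = goldφ + 1 := Real.goldenRatio_sq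
  rw [quaternion_norm_eq_one_iff, icoq, quaternion_div_two, hinv]
  simp
  linear_combination (1 / 2) * hsq

lemma norm_eq_one_of_mem_I120 {x : Quaternion ℝ} (hx : x ∈ I120) : ‖x‖ = 1 := by
  refine norm_eq_one_of_mem_genSubgroup (fun y hy => ?_) hx
  rcases hy with hy | rfl
  · exact norm_eq_one_of_mem_T24 hy
  · exact norm_icoq

lemma one_le_norm_one_sub_of_mem_T24 {t : Quaternion ℝ} (ht : t ∈ T24) (h1 : t ≠ 1) :
    1 ≤ ‖1 - t‖ := by
  have hre := re_le_half_of_mem_T24 ht h1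
  have hnorm := (quaternion_norm_eq_one_iff t).mp (norm_eq_one_of_mem_T24 ht)
  have hsq : ‖1 - t‖ * ‖1 - t‖ = 2 - 2 * t.re := by
    rw [← Quaternion.normSq_eq_norm_mul_self, Quaternion.normSq_def']
    simp
    linear_combination hnorm
  nlinarith [norm_nonneg (1 - t)]

/-- If `x` and `y` are distinct elements of `I*₁₂₀` at Euclidean distance `φ⁻¹` (i.e. the
endpoints of an edge of the regular 600-cell with vertex set `I*₁₂₀`), then they lie in
different left cosets of `T*₂₄` in `I*₁₂₀`: `x⁻¹ * y ∉ T*₂₄`.  Hence the five left cosets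
of `T*₂₄` in `I*₁₂₀` furnish a proper 5-colouring of the facet adjacency graph of the
120-cell. -/
theorem adjacent_600cell_vertices_in_different_T24_cosets :
    ∀ x ∈ I120, ∀ y ∈ I120, x ≠ y → ‖x - y‖ = goldφ⁻¹ → x⁻¹ * y ∉ T24 := by
  intro x hx y _ hne hdist ht
  have hx1 := norm_eq_one_of_mem_I120 hx
  have hx0 : x ≠ 0 := norm_ne_zero_iff.mp (by simp [hx1])
  have ht1 : x⁻¹ * y ≠ 1 := fun h => hne ((inv_mul_eq_one₀ hx0).mp h)
  have hle := one_le_norm_one_sub_of_mem_T24 ht ht1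
  have hnorm : ‖1 - x⁻¹ * y‖ = goldφ⁻¹ := by
    rw [← hdist, ← one_mul ‖1 - x⁻¹ * y‖, ← hx1, ← norm_mul, mul_sub, mul_one,
      mul_inv_cancel_left₀ hx0]
  have hlt : goldφ⁻¹ < 1 := inv_lt_one_of_one_lt₀ Real.one_lt_goldenRatio
  linarith
end
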